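/- arXiv:math/9505203 — 2 statements merged into one kernel-verified Lean document; each statement's English description precedes it below -/
import Mathlib

section
/- Assume CH holds (2^ω = ω₁). Then every initially ω₁-compact regular Hausdorff (T₃) space of countable tightness is compact. -/
/-!
Let `X` be regular, of tightness at most an infinite cardinal `τ`, and initially `2 ^ τ`-compact; CH
makes `2 ^ τ = ω₁` for `τ = ω`. If `D ⊆ X` has cardinality at most `τ`, regularity gives, for each
point of `closure D` and each open cover of it, some `E ⊆ D` such that `closure E` lies in a member
of the cover and the point lies in `(closure (D \ E))ᶜ`, an open set meeting `closure D` only inside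
`closure E`. There are at most `2 ^ τ` such `E`, so `closure D` is compact.

Suppose now that an open cover of `X` has no finite subcover. In a recursion of length `τ⁺`, the
closures of the initial segments already chosen are covered by at most `τ` members of the cover, so
the next point can be chosen outside all of those. This yields a free sequence of length
`τ⁺ ≤ 2 ^ τ`. By initial compactness some point lies in the closure of every tail of that sequence;
by tightness it also lies in the closure of a proper initial segment, a contradiction.
-/

noncomputable section

/-- A space is initially ω₁-compact if every open cover of cardinality at most ℵ₁
has a finite subcover. -/
def InitiallyOmega1Compact (X : Type*) [TopologicalSpace X] : Prop :=
  ∀ U : Set (Set X), (∀ u ∈ U, IsOpen u) → ⋃₀ U = Set.univ →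
    Cardinal.mk ↥U ≤ Cardinal.aleph 1 →
    ∃ V ⊆ U, V.Finite ∧ ⋃₀ V = Set.univ

/-- A space has countable tightness if every point in the closure of a set `A` is in
the closure of a countable subset of `A`. -/
def CountableTightness (X : Type*) [TopologicalSpace X] : Prop :=
  ∀ A : Set X, ∀ x ∈ closure A, ∃ B ⊆ A, B.Countable ∧ x ∈ closure B

open Set Order
open Cardinal hiding univ

universe u v

/-- Initial `κ`-compactness: every open cover of cardinality at most `κ` has a finite subcover.
`InitiallyOmega1Compact` is the case `κ = ℵ₁`. -/
def InitiallyCompact (κ : Cardinal.{u}) (X : Type u) [TopologicalSpace X] : Prop :=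
  ∀ U : Set (Set X), (∀ u ∈ U, IsOpen u) → ⋃₀ U = univ → #U ≤ κ →
    ∃ V ⊆ U, V.Finite ∧ ⋃₀ V = univ

/-- Tightness at most `τ`: every point in the closure of a set is in the closure of a subset of
cardinality at most `τ`. `CountableTightness` is the case `τ = ℵ₀`. -/
def TightnessLE (τ : Cardinal.{u}) (X : Type u) [TopologicalSpace X] : Prop :=
  ∀ A : Set X, ∀ x ∈ closure A, ∃ B ⊆ A, #B ≤ τ ∧ x ∈ closure B

/-- Free sequences: every initial segment and the complementary tail have disjoint closures.
The length of the sequence is the order type of the index set `I`. -/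
def IsFreeSequence {I X : Type*} [LinearOrder I] [TopologicalSpace X] (x : I → X) : Prop :=
  ∀ a, Disjoint (closure (x '' Iio a)) (closure (x '' Ici a))

theorem continuum_eq_aleph_one_of_universe (h : continuum.{v} = ℵ₁) : continuum.{u} = ℵ₁ := by
  rw [← lift_eq_aleph_one.{v}, lift_continuum] at h
  rwa [← lift_eq_aleph_one.{u, v}, lift_continuum]

theorem exists_subset_Iio_of_mk_lt_cof {I : Type u} [LinearOrder I] {S : Set I}
    (hS : #S < cof I) : ∃ a, S ⊆ Iio a :=
  not_isCofinal_iff.1 fun h => hS.not_ge (cof_le h)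

theorem mk_Iic_toType_ord_succ_le {τ : Cardinal.{u}} (hτ : ℵ₀ ≤ τ) (a : (succ τ).ord.ToType) :
    #(Iic a) ≤ τ := by
  have hinf : ℵ₀ ≤ #(succ τ).ord.ToType := by simpa using hτ.trans (le_succ τ)
  exact lt_succ_iff.1 ((mk_Iic_lt a (by simp) hinf).trans_eq (by simp))

theorem lt_cof_toType_ord_succ {τ : Cardinal.{u}} (hτ : ℵ₀ ≤ τ) :
    τ < cof (succ τ).ord.ToType := by
  rw [Ordinal.cof_toType, (isRegular_succ hτ).cof_ord]
  exact lt_succ τ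

section Tightness

variable {X : Type u} [TopologicalSpace X]

theorem CountableTightness.tightnessLE (h : CountableTightness X) : TightnessLE ℵ₀ X := by
  simpa only [TightnessLE, CountableTightness, le_aleph0_iff_set_countable] using h

theorem TightnessLE.exists_mem_closure_image_Iio {τ : Cardinal.{u}} (h : TightnessLE τ X)
    {I : Type u} [LinearOrder I] (hI : τ < cof I) {x : I → X} {p : X}
    (hp : p ∈ closure (range x)) : ∃ a, p ∈ closure (x '' Iio a) := by
  obtain ⟨B, hBx, hBτ, hpB⟩ := h _ p hp
  have hpre : ∀ y : B, ∃ a, x a = y := fun y => hBx y.2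
  choose g hg using hpre
  obtain ⟨a, ha⟩ := exists_subset_Iio_of_mk_lt_cof
    (((mk_range_le (f := g)).trans hBτ).trans_lt hI)
  have hBa : B ⊆ x '' Iio a := fun y hy => ⟨g ⟨y, hy⟩, ha (mem_range_self _), hg ⟨y, hy⟩⟩
  exact ⟨a, closure_mono hBa hpB⟩

end Tightness

namespace InitiallyCompact

variable {X : Type u} [TopologicalSpace X] {κ τ : Cardinal.{u}}

theorem elim_finite_subcover_of_isClosed (h : InitiallyCompact κ X) {ι : Type u} (hι : #ι ≤ κ)
    {K : Set X} (hK : IsClosed K) {U : ι → Set X} (hU : ∀ i, IsOpen (U i))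
    (hKU : K ⊆ ⋃ i, U i) : ∃ t : Finset ι, K ⊆ ⋃ i ∈ t, U i := by
  rcases isEmpty_or_nonempty ι with _ | _
  · exact ⟨∅, by simpa using hKU⟩
  let W : ι → Set X := fun i => Kᶜ ∪ U i
  have hWcover : ⋃₀ range W = univ := by
    rwa [sUnion_range, ← union_iUnion, ← compl_subset_iff_union, compl_compl]
  have hWfin : ∃ V ⊆ W '' univ, V.Finite ∧ ⋃₀ V = univ := by
    rw [image_univ]
    exact h (range W) (forall_mem_range.2 fun i => hK.isOpen_compl.union (hU i)) hWcover
      (mk_range_le.trans hι)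
  obtain ⟨S, -, hS, hScover⟩ := exists_subset_image_finite_and.1 hWfin
  refine ⟨hS.toFinset, fun x hx => ?_⟩
  obtain ⟨_, ⟨i, hi, rfl⟩, hxi⟩ : x ∈ ⋃₀ (W '' S) := hScover ▸ mem_univ x
  exact mem_biUnion (hS.mem_toFinset.2 hi) (hxi.resolve_left (not_not_intro hx))

theorem nonempty_iInter_of_directed (h : InitiallyCompact κ X) {ι : Type u} [Nonempty ι]
    (hι : #ι ≤ κ) {Z : ι → Set X} (hdir : Directed (· ⊇ ·) Z) (hne : ∀ i, (Z i).Nonempty)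
    (hcl : ∀ i, IsClosed (Z i)) : (⋂ i, Z i).Nonempty := by
  by_contra hempty
  have hcover : univ ⊆ ⋃ i, (Z i)ᶜ := by
    rw [← compl_iInter, not_nonempty_iff_eq_empty.1 hempty, compl_empty]
  obtain ⟨t, ht⟩ :=
    h.elim_finite_subcover_of_isClosed hι isClosed_univ (fun i => (hcl i).isOpen_compl) hcover
  obtain ⟨j, hj⟩ := hdir.finset_le t
  obtain ⟨x, hx⟩ := hne j
  obtain ⟨i, hi, hxi⟩ := mem_iUnion₂.1 (ht (mem_univ x))
  exact hxi (hj i hi hx)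

theorem isCompact_closure [RegularSpace X] (h : InitiallyCompact κ X) {D : Set X}
    (hD : 2 ^ #D ≤ κ) : IsCompact (closure D) := by
  refine isCompact_of_finite_subcover fun {ι} U hU hDU => ?_
  let G : Set (Set X) := {E ∈ 𝒫 D | ∃ i, closure E ⊆ U i}
  have hGcard : #G ≤ κ :=
    (mk_le_mk_of_subset (sep_subset _ _)).trans ((mk_powerset D).trans_le hD)
  have hGcover : closure D ⊆ ⋃ E : G, (closure (D \ E))ᶜ := by
    intro x hx
    obtain ⟨i, hi⟩ := mem_iUnion.1 (hDU hx)
    obtain ⟨K, hKx, hK, hKU⟩ := exists_mem_nhds_isClosed_subset ((hU i).mem_nhds hi)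
    have hDK : D ∩ K ∈ G :=
      ⟨inter_subset_left, i, (closure_minimal inter_subset_right hK).trans hKU⟩
    refine mem_iUnion.2 ⟨⟨D ∩ K, hDK⟩, fun hx' => ?_⟩
    obtain ⟨y, hyK, hyD, hy⟩ := mem_closure_iff_nhds.1 hx' K hKx
    exact hy ⟨hyD, hyK⟩
  obtain ⟨t, ht⟩ := h.elim_finite_subcover_of_isClosed hGcard isClosed_closure
    (fun _ => isClosed_closure.isOpen_compl) hGcover
  have hG : ∀ E : G, ∃ i, closure (E : Set X) ⊆ U i := fun E => E.2.2
  choose i hi using hG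
  classical
  refine ⟨t.image i, fun x hx => ?_⟩
  obtain ⟨E, hEt, hxE⟩ := mem_iUnion₂.1 (ht hx)
  have hxE' : x ∈ closure (D \ E) ∪ closure E := by
    rw [← closure_union]
    exact closure_mono (by simp) hx
  exact mem_biUnion (Finset.mem_coe.2 (Finset.mem_image_of_mem i hEt))
    (hi E (hxE'.resolve_left hxE))

theorem not_isFreeSequence (h : InitiallyCompact κ X) (ht : TightnessLE τ X) {I : Type u}
    [LinearOrder I] (hI : #I ≤ κ) (hcof : τ < cof I) (x : I → X) : ¬ IsFreeSequence x := by
  intro hx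
  have : Nonempty I := cof_ne_zero_iff.1 (pos_of_gt hcof).ne'
  have hdir : Directed (· ⊇ ·) fun a => closure (x '' Ici a) :=
    Antitone.directed_ge fun a b hab => closure_mono (image_mono (Ici_subset_Ici.2 hab))
  obtain ⟨p, hp⟩ := h.nonempty_iInter_of_directed hI hdir
    (fun a => (nonempty_Ici.image x).closure) fun _ => isClosed_closure
  rw [mem_iInter] at hp
  obtain ⟨a, ha⟩ := ht.exists_mem_closure_image_Iio hcof
    (closure_mono (image_subset_range x _) (hp (Classical.arbitrary I)))
  exact disjoint_left.1 (hx a) ha (hp a)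

end InitiallyCompact

theorem exists_seq_eq_apply_images_Iio {I X : Type*} [LinearOrder I] [WellFoundedLT I]
    (f : Set (Set X) → X) : ∃ x : I → X, ∀ b, x b = f ((fun a => x '' Iio a) '' Iic b) := by
  let F : ∀ b : I, (∀ a, a < b → X) → X := fun b prev =>
    f (range fun a : Iic b => range fun c : Iio a.1 => prev c.1 (c.2.trans_le a.2))
  refine ⟨wellFounded_lt.fix F, fun b => ?_⟩
  simp only [image_eq_range]
  exact wellFounded_lt.fix_eq F b

theorem exists_isFreeSequence {X I : Type u} [TopologicalSpace X] [LinearOrder I]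
    [WellFoundedLT I] {τ : Cardinal.{u}} (hI : ∀ a : I, #(Iic a) ≤ τ) {W : Set X → Set X}
    (hWopen : ∀ D, IsOpen (W D)) (hWcl : ∀ D : Set X, #D ≤ τ → closure D ⊆ W D)
    (hW : ∀ 𝒟 : Set (Set X), #𝒟 ≤ τ → ∃ x, ∀ D ∈ 𝒟, x ∉ W D) :
    ∃ x : I → X, IsFreeSequence x := by
  have : Nonempty X := (hW ∅ (by simp)).nonempty
  choose! f hf using hW
  obtain ⟨x, hx⟩ := exists_seq_eq_apply_images_Iio (I := I) f
  refine ⟨x, fun a => ?_⟩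
  have hseg : #(x '' Iio a) ≤ τ :=
    mk_image_le.trans ((mk_le_mk_of_subset Iio_subset_Iic_self).trans (hI a))
  have htail : Disjoint (W (x '' Iio a)) (x '' Ici a) := by
    rw [disjoint_right, forall_mem_image]
    intro b hab
    rw [hx b]
    exact hf _ (mk_image_le.trans (hI b)) _ (mem_image_of_mem _ hab)
  exact (htail.closure_right (hWopen _)).mono_left (hWcl _ hseg)

theorem InitiallyCompact.compactSpace_of_isCompact_closure {X : Type u} [TopologicalSpace X]
    {κ τ : Cardinal.{u}} (hτ : ℵ₀ ≤ τ) (hτκ : τ < κ) (h : InitiallyCompact κ X)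
    (ht : TightnessLE τ X) (hcpt : ∀ D : Set X, #D ≤ τ → IsCompact (closure D)) :
    CompactSpace X := by
  refine ⟨isCompact_of_finite_subcover fun {ι} U hU hcover => ?_⟩
  by_contra! hfin
  have hclosure : ∀ D : Set X, #D ≤ τ → ∃ t : Finset ι, closure D ⊆ ⋃ i ∈ t, U i :=
    fun D hD => (hcpt D hD).elim_finite_subcover U hU ((subset_univ _).trans hcover)
  choose! t htD using hclosure
  let W : Set X → Set X := fun D => ⋃ i ∈ t D, U i
  have hWopen : ∀ D, IsOpen (W D) := fun D => isOpen_biUnion fun i _ => hU i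
  have hW : ∀ 𝒟 : Set (Set X), #𝒟 ≤ τ → ∃ x, ∀ D ∈ 𝒟, x ∉ W D := by
    intro 𝒟 h𝒟
    by_contra! hx
    obtain ⟨s, hs⟩ := h.elim_finite_subcover_of_isClosed (h𝒟.trans hτκ.le) isClosed_univ
      (fun D : 𝒟 => hWopen D) fun x _ => by simpa using hx x
    classical
    exact hfin (s.biUnion fun D => t D) (by rwa [Finset.set_biUnion_biUnion])
  let I : Type u := (succ τ).ord.ToType
  have hI : #I ≤ κ := by simpa [I] using hτκ
  obtain ⟨x, hx⟩ := exists_isFreeSequence (mk_Iic_toType_ord_succ_le hτ) hWopen htD hW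
  exact h.not_isFreeSequence ht hI (lt_cof_toType_ord_succ hτ) x hx

theorem stmt9_general {X : Type u} [TopologicalSpace X] [RegularSpace X] {τ : Cardinal.{u}}
    (hτ : ℵ₀ ≤ τ) (hinit : InitiallyCompact (2 ^ τ) X) (ht : TightnessLE τ X) : CompactSpace X :=
  hinit.compactSpace_of_isCompact_closure hτ (cantor τ) ht fun _ hD =>
    hinit.isCompact_closure (power_le_power_left two_ne_zero hD)

theorem stmt9 (hCH : Cardinal.continuum = Cardinal.aleph 1)
    {X : Type*} [TopologicalSpace X] [T3Space X]
    (hinit : InitiallyOmega1Compact X) (ht : CountableTightness X) :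
    IsCompact (Set.univ : Set X) := by
  have hinit' : InitiallyCompact (2 ^ ℵ₀) X := by
    rwa [two_power_aleph0, continuum_eq_aleph_one_of_universe hCH]
  exact (stmt9_general le_rfl hinit' ht.tightnessLE).isCompact_univ
end
end

section
/- Let f : [ω₂]² → [ω₂]^{≤ω} satisfy f{α,β} ⊆ α ∩ β for all pairs, let p = (a,h,i) and p' = (a',h',i') be good twins in P_f with amalgamation r = p + p' = (b,g,j), and let δ_η = min{δ ∈ a ∩ a' : η ∈ h(δ) ∪ h'(δ)} whenever this minimum exists. Then for every ξ ∈ a ∩ a': g(ξ) = h(ξ) ∪ {η ∈ a' \ a : δ_η ∈ h(ξ)} = h'(ξ) ∪ {η ∈ a \ a' : δ_η ∈ h'(ξ)}. -/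
attribute [local instance] Classical.propDecidable

noncomputable section

/-- The second uncountable cardinal ω₂, as an ordinal. -/
def omega2 : Ordinal := (Cardinal.aleph 2).ord

/-- The operation `x * y` on nonempty finite sets of ordinals with `max x ≠ max y`:
`x \ y` if `max x ∈ y`, `y \ x` if `max y ∈ x`, and `x ∩ y` otherwise. -/
def ostar (x y : Finset Ordinal) : Finset Ordinal :=
  if ∃ m ∈ y, x.max = (m : WithBot Ordinal) then x \ y
  else if ∃ m ∈ x, y.max = (m : WithBot Ordinal) then y \ x
  else x ∩ y

/-- The conditions of the poset `P_f`: triples `(a, h, i)` where `a` is a finite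
subset of ω₂, `h : a → 𝒫(a)` with `max (h ξ) = ξ`, `i : [a]² → 𝒫(a)` with
`i {ξ,η} ⊆ f {ξ,η}`, and `h ξ * h η ⊆ ⋃ {h ν : ν ∈ i {ξ,η}}`. -/
structure PfCond (f : Ordinal → Ordinal → Set Ordinal) where
  a : Finset Ordinal
  h : Ordinal → Finset Ordinal
  i : Ordinal → Ordinal → Finset Ordinal
  a_lt : ∀ ξ ∈ a, ξ < omega2
  h_sub : ∀ ξ ∈ a, h ξ ⊆ a
  h_mem : ∀ ξ ∈ a, ξ ∈ h ξ
  h_le : ∀ ξ ∈ a, ∀ η ∈ h ξ, η ≤ ξ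
  i_symm : ∀ ξ η, i ξ η = i η ξ
  i_sub_f : ∀ ξ ∈ a, ∀ η ∈ a, ξ ≠ η → ∀ ν ∈ i ξ η, ν ∈ f ξ η
  i_sub_a : ∀ ξ ∈ a, ∀ η ∈ a, ξ ≠ η → i ξ η ⊆ a
  star_cond : ∀ ξ ∈ a, ∀ η ∈ a, ξ ≠ η → ostar (h ξ) (h η) ⊆ (i ξ η).biUnion h

/-- The order on `P_f`: `p ≤ q` iff `a^p ⊇ a^q`, `h^p(ξ) ∩ a^q = h^q(ξ)` for
`ξ ∈ a^q`, and `i^p` extends `i^q`. -/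
def PfLe {f : Ordinal → Ordinal → Set Ordinal} (p q : PfCond f) : Prop :=
  q.a ⊆ p.a ∧ (∀ ξ ∈ q.a, p.h ξ ∩ q.a = q.h ξ) ∧
    ∀ ξ ∈ q.a, ∀ η ∈ q.a, ξ ≠ η → p.i ξ η = q.i ξ η

/-- Two finite subsets `x` and `y` of ω₂ are good for `f`. -/
def GoodFor (f : Ordinal → Ordinal → Set Ordinal) (x y : Finset Ordinal) : Prop :=
  ∀ α ∈ x ∩ y, ∀ β ∈ x \ y, ∀ γ ∈ y \ x,
    ((α < β ∧ α < γ) → α ∈ f β γ) ∧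
    (α < β → f α γ ⊆ f β γ) ∧
    (α < γ → f α β ⊆ f γ β)

/-- `p` and `p'` are good twins: the natural order preserving bijection between
`a^p` and `a^{p'}` is an isomorphism of the conditions fixing `a^p ∩ a^{p'}`,
`i` and `i'` agree on pairs from `a^p ∩ a^{p'}`, and `a^p`, `a^{p'}` are good
for `f`. -/
def GoodTwins {f : Ordinal → Ordinal → Set Ordinal} (p p' : PfCond f) : Prop :=
  (∃ e : Ordinal → Ordinal,
    Set.BijOn e ↑p.a ↑p'.a ∧
    (∀ ξ ∈ p.a, ∀ η ∈ p.a, ξ < η → e ξ < e η) ∧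
    (∀ ξ ∈ p.a ∩ p'.a, e ξ = ξ) ∧
    (∀ ξ ∈ p.a, p'.h (e ξ) = (p.h ξ).image e) ∧
    (∀ ξ ∈ p.a, ∀ η ∈ p.a, ξ ≠ η → p'.i (e ξ) (e η) = (p.i ξ η).image e)) ∧
  (∀ ξ ∈ p.a ∩ p'.a, ∀ η ∈ p.a ∩ p'.a, ξ ≠ η → p.i ξ η = p'.i ξ η) ∧
  GoodFor f p.a p'.a

/-- `δ` is the ordinal `δ_η = min {δ ∈ a^p ∩ a^{p'} : η ∈ h^p(δ) ∪ h^{p'}(δ)}`. -/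
def DeltaIs {f : Ordinal → Ordinal → Set Ordinal} (p p' : PfCond f)
    (η δ : Ordinal) : Prop :=
  δ ∈ p.a ∩ p'.a ∧ η ∈ p.h δ ∪ p'.h δ ∧
    ∀ δ' ∈ p.a ∩ p'.a, η ∈ p.h δ' ∪ p'.h δ' → δ ≤ δ'

/-!
Let `D = a ∩ a'`. Since `i` and `i'` agree on pairs from `D`, their values there are subsets of
`D`. Fix `η ∈ a' \ a` for which `δ = δ_η` exists; then `η ∈ h'(δ)`. If `ξ ∈ D` lies above `δ` and
exactly one of `η`, `δ` belonged to `h'(ξ)`, then `η` would lie in `h'(δ) * h'(ξ)`, hence in `h'(ν)`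
for some `ν ∈ i'{δ, ξ} ⊆ D ∩ f{δ, ξ}`. As `f{δ, ξ} ⊆ δ`, this contradicts the minimality of `δ`.
So `η ∈ h'(ξ) ↔ δ ∈ h'(ξ)`, and `δ ∈ h'(ξ) ↔ δ ∈ h(ξ)` because `δ ∈ D`.
-/

namespace PfCond

variable {f : Ordinal → Ordinal → Set Ordinal}

section Single

variable (q : PfCond f) {δ ξ η : Ordinal}

theorem max_h (hξ : ξ ∈ q.a) : (q.h ξ).max = (ξ : WithBot Ordinal) :=
  le_antisymm (Finset.max_le fun η hη => WithBot.coe_le_coe.2 (q.h_le ξ hξ η hη))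
    (Finset.le_max (q.h_mem ξ hξ))

theorem ostar_h_of_mem (hδ : δ ∈ q.a) (hδξ : δ ∈ q.h ξ) :
    ostar (q.h δ) (q.h ξ) = q.h δ \ q.h ξ :=
  if_pos ⟨δ, hδξ, q.max_h hδ⟩

theorem ostar_h_of_notMem (hδ : δ ∈ q.a) (hξ : ξ ∈ q.a) (hlt : δ < ξ) (hδξ : δ ∉ q.h ξ) :
    ostar (q.h δ) (q.h ξ) = q.h δ ∩ q.h ξ := by
  have hξδ : ξ ∉ q.h δ := fun h => (q.h_le δ hδ ξ h).not_gt hlt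
  simp only [ostar, q.max_h hδ, q.max_h hξ, WithBot.coe_inj, exists_eq_right', hδξ, hξδ, if_false]

theorem mem_h_iff_of_notMem_biUnion (hδ : δ ∈ q.a) (hξ : ξ ∈ q.a) (hlt : δ < ξ)
    (hηδ : η ∈ q.h δ) (hη : η ∉ (q.i δ ξ).biUnion q.h) : η ∈ q.h ξ ↔ δ ∈ q.h ξ := by
  have hstar : η ∉ ostar (q.h δ) (q.h ξ) := fun h => hη (q.star_cond δ hδ ξ hξ hlt.ne h)
  by_cases hδξ : δ ∈ q.h ξ
  · rw [q.ostar_h_of_mem hδ hδξ, Finset.mem_sdiff] at hstar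
    exact iff_of_true (not_not.1 fun h => hstar ⟨hηδ, h⟩) hδξ
  · rw [q.ostar_h_of_notMem hδ hξ hlt hδξ, Finset.mem_inter] at hstar
    exact iff_of_false (fun h => hstar ⟨hηδ, h⟩) hδξ

theorem mem_h_iff_of_isLeast (hf : ∀ α β, f α β ⊆ Set.Iio α) {D : Set Ordinal}
    (hDa : D ⊆ q.a) (hDi : ∀ α ∈ D, ∀ β ∈ D, α ≠ β → ↑(q.i α β) ⊆ D)
    (hδ : IsLeast {d ∈ D | η ∈ q.h d} δ) (hξ : ξ ∈ D) : η ∈ q.h ξ ↔ δ ∈ q.h ξ := by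
  obtain ⟨⟨hδD, hηδ⟩, hmin⟩ := hδ
  rcases lt_trichotomy ξ δ with hlt | rfl | hlt
  · exact iff_of_false (fun h => (hmin ⟨hξ, h⟩).not_gt hlt)
      fun h => (q.h_le ξ (hDa hξ) δ h).not_gt hlt
  · exact iff_of_true hηδ (q.h_mem ξ (hDa hξ))
  · refine q.mem_h_iff_of_notMem_biUnion (hDa hδD) (hDa hξ) hlt hηδ fun h => ?_
    obtain ⟨ν, hν, hην⟩ := Finset.mem_biUnion.1 h
    have hνδ : ν < δ := hf δ ξ (q.i_sub_f δ (hDa hδD) ξ (hDa hξ) hlt.ne ν hν)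
    exact (hmin ⟨hDi δ hδD ξ hξ hlt.ne hν, hην⟩).not_gt hνδ

end Single

/-- Two conditions `(a, h, i)` and `(a', h', i')` are coherent if their restrictions to `a ∩ a'`
coincide: `h(ξ) ∩ a ∩ a' = h'(ξ) ∩ a ∩ a'` for `ξ ∈ a ∩ a'`, and `i`, `i'` agree on `[a ∩ a']²`.
It is expressed without a bijection `a → a'`, hence is visibly symmetric, so that each of the two
formulas for `g(ξ)` is the other one with the conditions exchanged. -/
structure Coherent (p p' : PfCond f) : Prop where
  mem_h_iff : ∀ ξ ∈ p.a ∩ p'.a, ∀ η ∈ p.a ∩ p'.a, (η ∈ p.h ξ ↔ η ∈ p'.h ξ)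
  i_eq : ∀ ξ ∈ p.a ∩ p'.a, ∀ η ∈ p.a ∩ p'.a, ξ ≠ η → p.i ξ η = p'.i ξ η

variable {p p' : PfCond f} {ξ η δ : Ordinal}

theorem Coherent.symm (hc : Coherent p p') : Coherent p' p where
  mem_h_iff ξ hξ η hη := by
    rw [Finset.inter_comm] at hξ hη
    exact (hc.mem_h_iff ξ hξ η hη).symm
  i_eq ξ hξ η hη hne := by
    rw [Finset.inter_comm] at hξ hη
    exact (hc.i_eq ξ hξ η hη hne).symm

theorem Coherent.i_subset_inter (hc : Coherent p p') (hξ : ξ ∈ p.a ∩ p'.a)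
    (hη : η ∈ p.a ∩ p'.a) (hne : ξ ≠ η) : p'.i ξ η ⊆ p.a ∩ p'.a := by
  obtain ⟨hξa, hξa'⟩ := Finset.mem_inter.1 hξ
  obtain ⟨hηa, hηa'⟩ := Finset.mem_inter.1 hη
  refine Finset.subset_inter ?_ (p'.i_sub_a ξ hξa' η hηa' hne)
  rw [← hc.i_eq ξ hξ η hη hne]
  exact p.i_sub_a ξ hξa η hηa hne

end PfCond

section Twins

variable {f : Ordinal → Ordinal → Set Ordinal} {p p' : PfCond f} {ξ η δ : Ordinal}

theorem GoodTwins.coherent (htw : GoodTwins p p') : PfCond.Coherent p p' := by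
  obtain ⟨⟨e, hbij, -, hfix, hh, -⟩, hi, -⟩ := htw
  refine ⟨fun ξ hξ η hη => ?_, hi⟩
  have hξa : ξ ∈ p.a := (Finset.mem_inter.1 hξ).1
  have himage : p'.h ξ = (p.h ξ).image e := by rw [← hh ξ hξa, hfix ξ hξ]
  rw [himage, Finset.mem_image]
  refine ⟨fun h => ⟨η, h, hfix η hη⟩, ?_⟩
  rintro ⟨x, hx, hxη⟩
  rwa [← hbij.injOn (p.h_sub ξ hξa hx) (Finset.mem_inter.1 hη).1 (hxη.trans (hfix η hη).symm)]

theorem deltaIs_comm : DeltaIs p p' η δ ↔ DeltaIs p' p η δ := by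
  simp only [DeltaIs, Finset.inter_comm p.a, Finset.union_comm (p.h _)]

theorem deltaIs_iff_isLeast :
    DeltaIs p p' η δ ↔ IsLeast {d ∈ (↑(p.a ∩ p'.a) : Set Ordinal) | η ∈ p.h d ∪ p'.h d} δ :=
  ⟨fun h => ⟨⟨h.1, h.2.1⟩, fun d hd => h.2.2 d hd.1 hd.2⟩,
    fun h => ⟨h.1.1, h.1.2, fun _ hdD hηd => h.2 ⟨hdD, hηd⟩⟩⟩

theorem exists_deltaIs (hξ : ξ ∈ p.a ∩ p'.a) (hη : η ∈ p.h ξ ∪ p'.h ξ) :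
    ∃ δ, DeltaIs p p' η δ :=
  ⟨_, deltaIs_iff_isLeast.2 (isLeast_csInf ⟨ξ, hξ, hη⟩)⟩

theorem DeltaIs.isLeast_of_notMem (hδ : DeltaIs p p' η δ) (hη : η ∉ p.a) :
    IsLeast {d ∈ (↑(p.a ∩ p'.a) : Set Ordinal) | η ∈ p'.h d} δ := by
  obtain ⟨hδD, hηδ, hmin⟩ := hδ
  have hηδ' : η ∈ p'.h δ :=
    (Finset.mem_union.1 hηδ).resolve_left fun h => hη (p.h_sub δ (Finset.mem_inter.1 hδD).1 h)
  exact ⟨⟨hδD, hηδ'⟩, fun d hd => hmin d hd.1 (Finset.mem_union_right _ hd.2)⟩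

theorem DeltaIs.mem_h_right_iff (hδ : DeltaIs p p' η δ) (hf : ∀ α β, f α β ⊆ Set.Iio α)
    (hc : PfCond.Coherent p p') (hξ : ξ ∈ p.a ∩ p'.a) (hη : η ∉ p.a) :
    η ∈ p'.h ξ ↔ δ ∈ p.h ξ := by
  have hDa' : (↑(p.a ∩ p'.a) : Set Ordinal) ⊆ p'.a := Finset.coe_subset.2 Finset.inter_subset_right
  have hleast : η ∈ p'.h ξ ↔ δ ∈ p'.h ξ :=
    p'.mem_h_iff_of_isLeast hf hDa' (fun _ hα _ hβ hne => hc.i_subset_inter hα hβ hne)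
      (hδ.isLeast_of_notMem hη) hξ
  exact hleast.trans (hc.mem_h_iff ξ hξ δ hδ.1).symm

theorem PfCond.Coherent.union_h_eq_union_filter (hc : PfCond.Coherent p p')
    (hf : ∀ α β, f α β ⊆ Set.Iio α) (hξ : ξ ∈ p.a ∩ p'.a) :
    p.h ξ ∪ p'.h ξ = p.h ξ ∪
      (p'.a \ p.a).filter (fun η => ∃ d, DeltaIs p p' η d ∧ d ∈ p.h ξ) := by
  ext η
  simp only [Finset.mem_union, Finset.mem_filter, Finset.mem_sdiff]
  constructor
  · rintro (h | h)
    · exact Or.inl h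
    have hηa' : η ∈ p'.a := p'.h_sub ξ (Finset.mem_inter.1 hξ).2 h
    by_cases hηa : η ∈ p.a
    · exact Or.inl ((hc.mem_h_iff ξ hξ η (Finset.mem_inter.2 ⟨hηa, hηa'⟩)).2 h)
    obtain ⟨δ, hδ⟩ := exists_deltaIs hξ (Finset.mem_union_right (p.h ξ) h)
    exact Or.inr ⟨⟨hηa', hηa⟩, δ, hδ, (hδ.mem_h_right_iff hf hc hξ hηa).1 h⟩
  · rintro (h | ⟨⟨-, hηa⟩, δ, hδ, hδξ⟩)
    · exact Or.inl h
    · exact Or.inr ((hδ.mem_h_right_iff hf hc hξ hηa).2 hδξ)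

end Twins

theorem stmt13_general {f : Ordinal → Ordinal → Set Ordinal} (hf : ∀ α β, f α β ⊆ Set.Iio α)
    {p p' : PfCond f} (hc : PfCond.Coherent p p') {ξ : Ordinal} (hξ : ξ ∈ p.a ∩ p'.a) :
    p.h ξ ∪ p'.h ξ = p.h ξ ∪
        (p'.a \ p.a).filter (fun η => ∃ d, DeltaIs p p' η d ∧ d ∈ p.h ξ) ∧
      p.h ξ ∪ p'.h ξ = p'.h ξ ∪
        (p.a \ p'.a).filter (fun η => ∃ d, DeltaIs p p' η d ∧ d ∈ p'.h ξ) := by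
  refine ⟨hc.union_h_eq_union_filter hf hξ, ?_⟩
  rw [Finset.inter_comm] at hξ
  simpa only [Finset.union_comm (p.h ξ), deltaIs_comm (p := p)] using
    hc.symm.union_h_eq_union_filter hf hξ

theorem stmt13
    (f : Ordinal → Ordinal → Set Ordinal)
    (hsymm : ∀ α β, f α β = f β α)
    (hlt : ∀ α β γ, γ ∈ f α β → γ < α ∧ γ < β)
    (hcount : ∀ α β, (f α β).Countable)
    (p p' : PfCond f) (htw : GoodTwins p p')
    (ξ : Ordinal) (hξ : ξ ∈ p.a ∩ p'.a) :
    p.h ξ ∪ p'.h ξ = p.h ξ ∪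
        (p'.a \ p.a).filter (fun η => ∃ d, DeltaIs p p' η d ∧ d ∈ p.h ξ) ∧
      p.h ξ ∪ p'.h ξ = p'.h ξ ∪
        (p.a \ p'.a).filter (fun η => ∃ d, DeltaIs p p' η d ∧ d ∈ p'.h ξ) :=
  stmt13_general (fun α β γ hγ => (hlt α β γ hγ).1) htw.coherent hξ
end
end
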